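/- arXiv:2204.01277 — 7 statements merged into one kernel-verified Lean document; each statement's English description precedes it below -/
import Mathlib

section
/- For every irrational real number θ, the set S_θ is infinite (so that its elements can be enumerated in increasing order as q_0 = 1 < q_1 < q_2 < …). -/
/-- For an irrational `θ`, `Sθ θ` is the set of positive integers `q` such that
`⌈qθ⌉/q < ⌈q'θ⌉/q'` for every positive integer `q' < q`. -/
def Sθ (θ : ℝ) : Set ℕ :=
  {q | 0 < q ∧ ∀ q' : ℕ, 0 < q' → q' < q →
    (⌈(q : ℝ) * θ⌉ : ℝ) / (q : ℝ) < (⌈(q' : ℝ) * θ⌉ : ℝ) / (q' : ℝ)}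

/-- For every irrational real number `θ`, the set `S_θ` is infinite. -/
theorem Sθ_infinite (θ : ℝ) (hθ : Irrational θ) : (Sθ θ).Infinite := by
  classical
  have hgt : ∀ q : ℕ, 0 < q → θ < (⌈(q : ℝ) * θ⌉ : ℝ) / (q : ℝ) := by
    intro q hq
    have hq' : (0 : ℝ) < q := by exact_mod_cast hq
    rw [lt_div_iff₀ hq', mul_comm]
    refine lt_of_le_of_ne (Int.le_ceil _) ?_
    exact (hθ.natCast_mul hq.ne').ne_int _
  have hlt : ∀ q : ℕ, 0 < q → (⌈(q : ℝ) * θ⌉ : ℝ) / (q : ℝ) < θ + 1 / q := by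
    intro q hq
    have hq' : (0 : ℝ) < q := by exact_mod_cast hq
    rw [div_lt_iff₀ hq', add_mul, div_mul_cancel₀ _ hq'.ne', mul_comm θ]
    exact Int.ceil_lt_add_one _
  apply Set.infinite_of_forall_exists_gt
  intro N
  obtain ⟨k, hk, hmin⟩ := Finset.exists_min_image (Finset.Icc 1 (N + 1))
    (fun q : ℕ => (⌈(q : ℝ) * θ⌉ : ℝ) / (q : ℝ)) ⟨1, by simp⟩
  rw [Finset.mem_Icc] at hk
  have hex : ∃ q : ℕ, 0 < q ∧
      (⌈(q : ℝ) * θ⌉ : ℝ) / (q : ℝ) < (⌈(k : ℝ) * θ⌉ : ℝ) / (k : ℝ) := by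
    obtain ⟨n, hn⟩ := exists_nat_one_div_lt (sub_pos.2 (hgt k (by omega)))
    refine ⟨n + 1, by omega, ?_⟩
    have h := hlt (n + 1) (by omega)
    push_cast at h ⊢
    linarith
  obtain ⟨hpos, hq⟩ := Nat.find_spec hex
  refine ⟨Nat.find hex, ⟨hpos, ?_⟩, ?_⟩
  · intro q' h0 h1
    have h := Nat.find_min hex h1
    push Not at h
    exact lt_of_lt_of_le hq (h h0)
  · by_contra hc
    have h := hmin (Nat.find hex) (by rw [Finset.mem_Icc]; omega)
    exact absurd hq (not_lt.2 h)
end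

section
/- For every irrational real number θ, the gaps between consecutive elements of S_θ are nondecreasing: if q < q' are consecutive elements of S_θ and q' < q'' are consecutive elements of S_θ, then q' − q ≤ q'' − q'. -/
/-- `q < q'` are consecutive elements of `Sθ θ`: both lie in `Sθ θ` and no element of
`Sθ θ` lies strictly between them. -/
def SθConsec (θ : ℝ) (q q' : ℕ) : Prop :=
  q ∈ Sθ θ ∧ q' ∈ Sθ θ ∧ q < q' ∧ ∀ r ∈ Sθ θ, ¬(q < r ∧ r < q')

/-- The increment between two elements of `Sθ` is a lower approximation. -/
lemma Sθ_incr_le (θ : ℝ) (a b : ℕ) (ha : a ∈ Sθ θ) (hb : b ∈ Sθ θ) (hab : a < b) :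
    (⌈(b : ℝ) * θ⌉ : ℝ) - (⌈(a : ℝ) * θ⌉ : ℝ) ≤ ((b : ℝ) - a) * θ := by
  by_contra hcon
  push Not at hcon
  have hapos : (0 : ℝ) < a := by exact_mod_cast ha.1
  have hbpos : (0 : ℝ) < b := by exact_mod_cast hb.1
  have hab' : (a : ℝ) < b := by exact_mod_cast hab
  have h1 := hb.2 a ha.1 hab
  have h2 := hb.2 (b - a) (by omega) (by have := ha.1; omega)
  rw [Nat.cast_sub hab.le] at h2
  have hd : (0 : ℝ) < (b : ℝ) - a := by linarith
  have hc : ⌈((b : ℝ) - a) * θ⌉ ≤ ⌈(b : ℝ) * θ⌉ - ⌈(a : ℝ) * θ⌉ := by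
    rw [Int.ceil_le]
    push_cast
    exact hcon.le
  have hc' : (⌈((b : ℝ) - a) * θ⌉ : ℝ) ≤ (⌈(b : ℝ) * θ⌉ : ℝ) - (⌈(a : ℝ) * θ⌉ : ℝ) := by
    exact_mod_cast hc
  rw [div_lt_div_iff₀ hbpos hapos] at h1
  rw [div_lt_div_iff₀ hbpos hd] at h2
  have := mul_le_mul_of_nonneg_right hc' hbpos.le
  nlinarith

/-- The gaps between consecutive elements of `S_θ` are nondecreasing. -/
theorem Sθ_gaps_monotone (θ : ℝ) (hθ : Irrational θ) (q q' q'' : ℕ)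
    (h1 : SθConsec θ q q') (h2 : SθConsec θ q' q'') :
    q' - q ≤ q'' - q' := by
  classical
  obtain ⟨hq, hq', hlt, hno⟩ := h1
  obtain ⟨-, hq'', hlt', -⟩ := h2
  by_contra hcon
  push Not at hcon
  have i1 := Sθ_incr_le θ q q' hq hq' hlt
  have i2 := Sθ_incr_le θ q' q'' hq' hq'' hlt'
  have hqpos : (0 : ℝ) < q := by exact_mod_cast hq.1
  have hq'pos : (0 : ℝ) < q' := by exact_mod_cast hq'.1
  have hl' : (q' : ℝ) < q'' := by exact_mod_cast hlt'
  have c'' := Int.le_ceil ((q'' : ℝ) * θ)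
  have c' := Int.le_ceil ((q' : ℝ) * θ)
  have hf := hq'.2 q hq.1 hlt
  -- the upper approximation at `q` is strict
  have hs : (q : ℝ) * θ < ⌈(q : ℝ) * θ⌉ := by
    have h : θ ≤ (⌈(q' : ℝ) * θ⌉ : ℝ) / q' := by
      rw [le_div_iff₀ hq'pos]
      linarith
    have h3 := lt_of_le_of_lt h hf
    rw [lt_div_iff₀ hqpos] at h3
    linarith
  have hex : ∃ r : ℕ, 0 < r ∧
      (⌈(r : ℝ) * θ⌉ : ℝ) / r < (⌈(q : ℝ) * θ⌉ : ℝ) / q := ⟨q', hq'.1, hf⟩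
  have hr : 0 < q + (q'' - q') ∧ (⌈((q + (q'' - q') : ℕ) : ℝ) * θ⌉ : ℝ) /
      ((q + (q'' - q') : ℕ) : ℝ) < (⌈(q : ℝ) * θ⌉ : ℝ) / q := by
    refine ⟨by omega, ?_⟩
    rw [Nat.cast_add, Nat.cast_sub hlt'.le]
    have hrpos : (0 : ℝ) < (q : ℝ) + (q'' - q') := by linarith
    have hc : ⌈((q : ℝ) + (q'' - q')) * θ⌉ ≤
        ⌈(q : ℝ) * θ⌉ + (⌈(q'' : ℝ) * θ⌉ - ⌈(q' : ℝ) * θ⌉) := by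
      rw [Int.ceil_le]
      push_cast
      linarith
    have hc' : (⌈((q : ℝ) + (q'' - q')) * θ⌉ : ℝ) ≤
        ⌈(q : ℝ) * θ⌉ + (⌈(q'' : ℝ) * θ⌉ - ⌈(q' : ℝ) * θ⌉) := by
      exact_mod_cast hc
    rw [div_lt_div_iff₀ hrpos hqpos]
    have e1 := mul_le_mul_of_nonneg_right (hc'.trans (add_le_add_right i2 _)) hqpos.le
    have e2 := mul_lt_mul_of_pos_left hs (sub_pos.2 hl')
    nlinarith
  have hm := Nat.find_spec hex
  have hmin := Nat.find_min' hex hr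
  have hm' : ∀ s, 0 < s → s < Nat.find hex →
      (⌈(q : ℝ) * θ⌉ : ℝ) / q ≤ (⌈(s : ℝ) * θ⌉ : ℝ) / s := by
    intro s hs0 hs1
    by_contra h
    exact Nat.find_min hex hs1 ⟨hs0, not_le.1 h⟩
  generalize Nat.find hex = m at hm hmin hm'
  refine hno m ⟨hm.1, fun s hs0 hs1 => lt_of_lt_of_le hm.2 (hm' s hs0 hs1)⟩ ⟨?_, by omega⟩
  rcases lt_trichotomy q m with h | h | h
  · exact h
  · subst h
    exact absurd hm.2 (lt_irrefl _)
  · exact absurd (hq.2 m hm.1 h) (not_lt.2 hm.2.le)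
end

section
/- For every irrational real number θ and every pair of consecutive elements q < q' of S_θ, the difference q' − q is an element of S_{−θ}. -/
/-- Below `q'`, the element `q` gives the best upper approximation. -/
theorem best_aux (θ : ℝ) (q q' : ℕ) (h : SθConsec θ q q') (k : ℕ) (hk : 0 < k) (hk' : k < q') :
    (⌈(q : ℝ) * θ⌉ : ℝ) / (q : ℝ) ≤ (⌈(k : ℝ) * θ⌉ : ℝ) / (k : ℝ) := by
  obtain ⟨hq, hq', hlt, hc⟩ := h
  induction k using Nat.strong_induction_on with
  | _ k ih =>
    rcases lt_trichotomy k q with hkq | rfl | hkq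
    · exact (hq.2 k hk hkq).le
    · exact le_rfl
    · by_contra hcon
      push Not at hcon
      exact hc k ⟨hk, fun j hj hjk => lt_of_lt_of_le hcon (ih j hjk hj (hjk.trans hk'))⟩ ⟨hkq, hk'⟩

/-- Any integer `a > kθ` satisfies `p k ≤ a q`. -/
theorem best_int (θ : ℝ) (q q' : ℕ) (h : SθConsec θ q q') (k : ℕ) (hk : 0 < k) (hk' : k < q')
    (a : ℤ) (ha : (k : ℝ) * θ ≤ a) : ⌈(q : ℝ) * θ⌉ * (k : ℤ) ≤ a * (q : ℤ) := by
  have h1 := best_aux θ q q' h k hk hk'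
  have hq : (0 : ℝ) < q := by exact_mod_cast h.1.1
  have hkr : (0 : ℝ) < k := by exact_mod_cast hk
  rw [div_le_div_iff₀ hq hkr] at h1
  have h2 : ⌈(q : ℝ) * θ⌉ * (k : ℤ) ≤ ⌈(k : ℝ) * θ⌉ * (q : ℤ) := by exact_mod_cast h1
  have h3 : ⌈(k : ℝ) * θ⌉ ≤ a := Int.ceil_le.2 ha
  exact h2.trans (mul_le_mul_of_nonneg_right h3 (by positivity))

/-- For consecutive elements `q < q'` of `S_θ`, the difference `q' - q` lies in `S_{-θ}`. -/
theorem Sθ_gap_mem_neg (θ : ℝ) (hθ : Irrational θ) (q q' : ℕ)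
    (h : SθConsec θ q q') : q' - q ∈ Sθ (-θ) := by
  have hB := best_int θ q q' h
  obtain ⟨⟨hq0, -⟩, ⟨hq0', hq'⟩, hlt, -⟩ := h
  have hlt' := hq' q hq0 hlt
  obtain ⟨e, he0, rfl⟩ : ∃ e, 0 < e ∧ q' = q + e := ⟨q' - q, by omega, by omega⟩
  rw [Nat.add_sub_cancel_left]
  have hqr : (0 : ℝ) < q := by exact_mod_cast hq0
  have her : (0 : ℝ) < e := by exact_mod_cast he0
  rw [div_lt_div_iff₀ (by exact_mod_cast hq0') hqr] at hlt'
  have hp1 := Int.le_ceil ((q : ℝ) * θ)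
  have hp2 := Int.ceil_lt_add_one ((q : ℝ) * θ)
  have hp1' := Int.le_ceil (((q + e : ℕ) : ℝ) * θ)
  generalize ⌈(q : ℝ) * θ⌉ = p at *
  generalize ⌈((q + e : ℕ) : ℝ) * θ⌉ = p' at *
  have hdet : p' * (q : ℤ) < p * ((q : ℤ) + e) := by exact_mod_cast hlt'
  push_cast at hp1'
  have hr : ((p' - p : ℤ) : ℝ) < (e : ℝ) * θ := by
    by_contra hcon
    push Not at hcon
    have := hB e he0 (by omega) _ hcon
    nlinarith
  have hceil : ⌈(e : ℝ) * -θ⌉ = -(p' - p) := by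
    rw [Int.ceil_eq_iff]
    push_cast at hr ⊢
    constructor <;> nlinarith
  refine ⟨he0, fun k hk hke => ?_⟩
  have hkr : (0 : ℝ) < k := by exact_mod_cast hk
  rw [hceil, div_lt_div_iff₀ her hkr]
  have hs := Int.le_ceil ((k : ℝ) * -θ)
  generalize ⌈(k : ℝ) * -θ⌉ = s at *
  obtain ⟨j, rfl⟩ := Nat.exists_eq_add_of_lt hke
  have h1 := hB (q + j + 1) (by omega) (by omega) (p' + s) (by
    push_cast at hp1' ⊢
    nlinarith)
  have goal' : -(p' - p) * (k : ℤ) < s * ((k + j + 1 : ℕ) : ℤ) := by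
    have hqz : (0 : ℤ) < q := by exact_mod_cast hq0
    refine lt_of_mul_lt_mul_right (a := (q : ℤ)) ?_ hqz.le
    push_cast at h1 hdet ⊢
    have hX : p' * (q : ℤ) - p * (q + (k + j + 1)) < 0 := by linarith
    have hj : (0 : ℤ) < j + 1 := by positivity
    have hk1 : (0 : ℤ) < k + j + 1 := by positivity
    have a1 := mul_neg_of_pos_of_neg hj hX
    have a2 := mul_le_mul_of_nonneg_left h1 hk1.le
    nlinarith
  exact_mod_cast goal'
end

section
/- For every irrational real number θ, the gaps between consecutive elements of S_θ tend to infinity: for every natural number n there exists a positive integer Q such that every pair of consecutive elements q < q' of S_θ with q ≥ Q satisfies q' − q ≥ n. -/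
lemma Sθ_key {θ : ℝ} {q : ℕ} (hq : q ∈ Sθ θ) (r : ℕ) (s : ℤ) (hr : 0 < r) (hrq : r < q)
    (hs : (r : ℝ) * θ ≤ s) : (⌈(q : ℝ) * θ⌉ : ℝ) * r < s * q := by
  have h := hq.2 r hr hrq
  have hq0 : (0 : ℝ) < q := by exact_mod_cast hq.1
  have hr0 : (0 : ℝ) < r := by exact_mod_cast hr
  rw [div_lt_div_iff₀ hq0 hr0] at h
  have h2 : (⌈(r : ℝ) * θ⌉ : ℝ) ≤ s := by exact_mod_cast Int.ceil_le.2 hs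
  nlinarith

lemma Sθ_eps (θ : ℝ) (n : ℕ) : ∃ ε : ℝ, 0 < ε ∧ ∀ d : ℕ, d < n → ∀ m : ℤ, (m : ℝ) < d * θ →
    ε ≤ d * θ - m := by
  induction n with
  | zero => exact ⟨1, one_pos, fun d hd => absurd hd (by omega)⟩
  | succ n ih =>
    obtain ⟨ε, he, h⟩ := ih
    have h1 : 0 < (n : ℝ) * θ - (⌈(n : ℝ) * θ⌉ - 1) := by
      have := Int.ceil_lt_add_one ((n : ℝ) * θ)
      linarith
    refine ⟨min ε _, lt_min he h1, fun d hd m hm => ?_⟩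
    rcases Nat.lt_succ_iff_lt_or_eq.1 hd with h2 | rfl
    · exact (min_le_left _ _).trans (h d h2 m hm)
    · refine (min_le_right _ _).trans ?_
      have h3 : m < ⌈(d : ℝ) * θ⌉ := Int.lt_ceil.2 hm
      have h4 : (m : ℝ) + 1 ≤ ⌈(d : ℝ) * θ⌉ := by exact_mod_cast h3
      linarith

lemma Sθ_approx (θ : ℝ) (ε : ℝ) (he : 0 < ε) : ∃ q : ℕ, 0 < q ∧ ∃ p : ℤ,
    0 ≤ p - q * θ ∧ p - q * θ < ε := by
  obtain ⟨N, hN⟩ := exists_nat_one_div_lt he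
  obtain ⟨k, hk0, -, hk⟩ := Real.exists_nat_abs_mul_sub_round_le θ (n := N + 1) (by omega)
  set j := round ((k : ℝ) * θ)
  have hN0 : (0 : ℝ) < (N : ℝ) + 1 := by positivity
  have hlt : 1 / (((N + 1 : ℕ) : ℝ) + 1) < 1 / ((N : ℝ) + 1) := by
    push_cast
    exact one_div_lt_one_div_of_lt hN0 (by linarith)
  have hle1 : 1 / ((N : ℝ) + 1) ≤ 1 := by
    rw [div_le_one hN0]
    have : (0 : ℝ) ≤ N := by positivity
    linarith
  obtain ⟨ha, hb⟩ := abs_le.1 hk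
  by_cases hs : (k : ℝ) * θ ≤ j
  · exact ⟨k, hk0, j, by linarith, by linarith⟩
  · push Not at hs
    set δ := (k : ℝ) * θ - j with hδ
    have hδ0 : 0 < δ := by linarith
    have hm1 := Nat.floor_le (a := 1 / δ) (by positivity)
    have hm2 := Nat.lt_floor_add_one (1 / δ)
    have hm0 : 0 < ⌊1 / δ⌋₊ := by
      rw [Nat.floor_pos, le_div_iff₀ hδ0]
      linarith
    set m := ⌊1 / δ⌋₊
    rw [le_div_iff₀ hδ0] at hm1
    rw [div_lt_iff₀ hδ0] at hm2
    have e : (((m : ℤ) * j + 1 : ℤ) : ℝ) - ((m * k : ℕ) : ℝ) * θ = 1 - m * δ := by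
      rw [hδ]; push_cast; ring
    refine ⟨m * k, Nat.mul_pos hm0 hk0, m * j + 1, ?_, ?_⟩
    · rw [e]; linarith
    · rw [e]; linarith

/-- The gaps between consecutive elements of `S_θ` tend to infinity. -/
theorem Sθ_gaps_tendsto_infinity (θ : ℝ) (hθ : Irrational θ) :
    ∀ n : ℕ, ∃ Q : ℕ, 0 < Q ∧
      ∀ q q' : ℕ, SθConsec θ q q' → Q ≤ q → n ≤ q' - q := by
  intro n
  obtain ⟨ε, he, hε⟩ := Sθ_eps θ n
  obtain ⟨q0, hq0, p0, h0, h1⟩ := Sθ_approx θ ε he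
  refine ⟨q0 + 1, by omega, fun q q' ⟨hq, hq', hlt, _⟩ hQ => ?_⟩
  by_contra! hd
  -- the defect at `q` is below `ε`
  have hsmall : (⌈(q : ℝ) * θ⌉ : ℝ) - q * θ < ε := by
    by_contra! hge
    have a1 := Sθ_key hq q0 p0 hq0 (by omega) (by linarith)
    have c : ((q - q0 : ℕ) : ℝ) = q - q0 := Nat.cast_sub (by omega)
    have a2 := Sθ_key hq (q - q0) (⌈(q : ℝ) * θ⌉ - p0) (by omega) (by omega)
      (by rw [c]; push_cast; linarith)
    rw [c] at a2
    push_cast at a2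
    linarith
  obtain ⟨d, rfl⟩ : ∃ d, q' = q + d := ⟨q' - q, by omega⟩
  have hd0 : 0 < d := by omega
  have b1 := Sθ_key hq' q ⌈(q : ℝ) * θ⌉ hq.1 hlt (Int.le_ceil _)
  have hceil := Int.le_ceil (((q + d : ℕ) : ℝ) * θ)
  set p' := ⌈((q + d : ℕ) : ℝ) * θ⌉
  set p := ⌈(q : ℝ) * θ⌉
  by_cases hs : (d : ℝ) * θ ≤ ((p' - p : ℤ) : ℝ)
  · have b2 := Sθ_key hq' d (p' - p) hd0 (by have := hq.1; omega) hs
    change (p' : ℝ) * _ < _ at b2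
    push_cast at b1 b2
    nlinarith
  · push Not at hs
    have b3 := hε d (by omega) _ hs
    push_cast at b3 hceil
    linarith
end

section
/- For every irrational real number θ and every pair of consecutive elements q < q' of S_θ with q > 1, one has q' − q ≠ q; equivalently, q' ≠ 2q. -/
/-- For consecutive elements `q < q'` of `S_θ` with `q > 1`, one has
`q' - q ≠ q`; equivalently, `q' ≠ 2q`. -/
theorem Sθ_gap_ne_self (θ : ℝ) (hθ : Irrational θ) (q q' : ℕ)
    (h : SθConsec θ q q') (hq : 1 < q) : q' - q ≠ q ∧ q' ≠ 2 * q := by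
  obtain ⟨⟨hq0, hqS⟩, ⟨hq'0, hq'S⟩, hlt, hcons⟩ := h
  have key : q' ≠ 2 * q := by
    intro he
    subst he
    obtain ⟨p, hp⟩ : ∃ p : ℤ, p = ⌈(q : ℝ) * θ⌉ := ⟨_, rfl⟩
    have h1 := hq'S q hq0 hlt
    rw [← hp] at hqS h1
    have hqR : (0 : ℝ) < q := by exact_mod_cast hq0
    have hple : (q : ℝ) * θ ≤ p := by rw [hp]; exact Int.le_ceil _
    -- upper bound on θ coming from `2 * q`
    have hθ2 : 2 * (q : ℝ) * θ ≤ 2 * p - 1 := by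
      obtain ⟨c, hc⟩ : ∃ c : ℤ, c = ⌈((2 * q : ℕ) : ℝ) * θ⌉ := ⟨_, rfl⟩
      have hcl : ((2 * q : ℕ) : ℝ) * θ ≤ c := by rw [hc]; exact Int.le_ceil _
      rw [← hc] at h1
      push_cast at h1 hcl
      rw [div_lt_div_iff₀ (by positivity) hqR] at h1
      have h2 : (c : ℝ) < 2 * p := by
        by_contra hcon
        push Not at hcon
        nlinarith
      have h3 : c < 2 * p := by exact_mod_cast h2
      have h4 : c ≤ 2 * p - 1 := by omega
      have h5 : (c : ℝ) ≤ 2 * p - 1 := by exact_mod_cast h4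
      linarith
    -- coprimality
    have hcop : IsCoprime p (q : ℤ) := by
      rw [Int.isCoprime_iff_gcd_eq_one]
      by_contra hg
      have hd1 : ((Int.gcd p q : ℕ) : ℤ) ∣ p := Int.gcd_dvd_left _ _
      have hd2 : Int.gcd p q ∣ q := by
        have := Int.gcd_dvd_right p (q : ℤ)
        exact_mod_cast this
      generalize Int.gcd p q = g at *
      obtain ⟨a, ha⟩ := hd1
      obtain ⟨b, hb⟩ := hd2
      have hg0 : g ≠ 0 := by rintro rfl; omega
      have hb0 : 0 < b := by
        rcases Nat.eq_zero_or_pos b with h | h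
        · subst h; omega
        · exact h
      have hbq : b < q := by
        have : 2 ≤ g := by omega
        nlinarith
      have h2 := hqS b hb0 hbq
      have hbR : (0 : ℝ) < b := by exact_mod_cast hb0
      have hgR : (0 : ℝ) < g := by exact_mod_cast Nat.pos_of_ne_zero hg0
      have e1 : (p : ℝ) = g * a := by rw [ha]; push_cast; rfl
      have e2 : (q : ℝ) = g * b := by rw [hb]; push_cast; rfl
      have h3 : (b : ℝ) * θ ≤ a := by
        rw [e1, e2, mul_assoc] at hple
        exact le_of_mul_le_mul_left hple hgR
      have h4 : (⌈(b : ℝ) * θ⌉ : ℝ) ≤ a := by exact_mod_cast Int.ceil_le.mpr h3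
      rw [e1, e2, mul_div_mul_left _ _ hgR.ne'] at h2
      have := div_le_div_of_nonneg_right h4 hbR.le
      linarith
    -- Bezout
    have hex : ∃ r : ℕ, 0 < r ∧ r < 2 * q ∧ (⌈(r : ℝ) * θ⌉ : ℝ) / r < (p : ℝ) / q := by
      obtain ⟨u, v, huv⟩ := hcop
      have hqZ : (0 : ℤ) < q := by exact_mod_cast hq0
      have m0 := Int.emod_nonneg u hqZ.ne'
      have m1 := Int.emod_lt_of_pos u hqZ
      have m2 := Int.mul_ediv_add_emod u q
      obtain ⟨r, hr⟩ := Int.eq_ofNat_of_zero_le (show 0 ≤ u % q + q by omega)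
      have hra : p * r = 1 + (p - p * (u / q) - v) * q := by
        rw [← hr]
        linear_combination huv + p * m2
      generalize p - p * (u / q) - v = a at hra
      have hr2 : 2 ≤ r := by omega
      refine ⟨r, by omega, by omega, ?_⟩
      have hrR : (2 : ℝ) ≤ r := by exact_mod_cast hr2
      have hraR : (p : ℝ) * r = 1 + a * q := by exact_mod_cast hra
      have h3 : (r : ℝ) * θ ≤ a := by
        have : (q : ℝ) * (r * θ) ≤ q * a := by nlinarith
        exact le_of_mul_le_mul_left this hqR
      have h4 : (⌈(r : ℝ) * θ⌉ : ℝ) ≤ a := by exact_mod_cast Int.ceil_le.mpr h3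
      rw [div_lt_div_iff₀ (by linarith) hqR]
      nlinarith
    classical
    obtain ⟨m0, m1, m2⟩ := Nat.find_spec hex
    have hmin := fun s hs => Nat.find_min hex (m := s) hs
    generalize Nat.find hex = m at *
    refine hcons m ⟨m0, ?_⟩ ⟨?_, m1⟩
    · intro s hs hsm
      have := hmin s hsm
      by_contra hcon
      exact this ⟨hs, by omega, by push Not at hcon; linarith⟩
    · by_contra hcon
      rcases Nat.lt_or_ge m q with h | h
      · have := hqS m m0 h
        linarith
      · have : m = q := by omega
        subst this
        rw [← hp] at m2
        exact lt_irrefl _ m2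
  exact ⟨by omega, key⟩
end

section
/- For every irrational real number θ, every pair of consecutive elements p < p' of S_{−θ}, and every integer N with p ≤ N < p', one has ⌊Nθ⌋ − ⌊(N − p)θ⌋ = ⌊pθ⌋. -/
theorem mem_S_neg_iff (θ : ℝ) (q : ℕ) : q ∈ Sθ (-θ) ↔ 0 < q ∧ ∀ q' : ℕ, 0 < q' → q' < q →
    Int.fract ((q : ℝ) * θ) * q' < Int.fract ((q' : ℝ) * θ) * q := by
  unfold Sθ
  simp only [Set.mem_setOf_eq]
  refine and_congr_right fun hq => forall_congr' fun r => forall_congr' fun hr =>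
    forall_congr' fun hlt => ?_
  have hq' : (0 : ℝ) < q := by exact_mod_cast hq
  have hr' : (0 : ℝ) < r := by exact_mod_cast hr
  rw [div_lt_div_iff₀ hq' hr', mul_neg, mul_neg, Int.ceil_neg, Int.ceil_neg]
  push_cast
  unfold Int.fract
  constructor <;> intro h <;> nlinarith

theorem fract_lt_of_mem (θ : ℝ) (q r : ℕ) (hq : q ∈ Sθ (-θ)) (hr : 0 < r) (hrq : r < q) :
    Int.fract ((q : ℝ) * θ) < Int.fract ((r : ℝ) * θ) := by
  rw [mem_S_neg_iff] at hq
  by_contra! hc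
  have h1 := hq.2 r hr hrq
  have h2 := hq.2 (q - r) (by omega) (by omega)
  have h3 : Int.fract (((q - r : ℕ) : ℝ) * θ)
      = Int.fract ((q : ℝ) * θ) - Int.fract ((r : ℝ) * θ) := by
    rw [Int.fract_eq_iff]
    refine ⟨by linarith, ?_, ⌊(q : ℝ) * θ⌋ - ⌊(r : ℝ) * θ⌋, ?_⟩
    · linarith [Int.fract_lt_one ((q : ℝ) * θ), Int.fract_nonneg ((r : ℝ) * θ)]
    · rw [Nat.cast_sub hrq.le]
      push_cast
      unfold Int.fract
      ring
  rw [h3, Nat.cast_sub hrq.le] at h2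
  nlinarith

theorem fract_le_of_consec (θ : ℝ) (p p' : ℕ) (h : SθConsec (-θ) p p') (n : ℕ)
    (h1 : p ≤ n) (h2 : n < p') : Int.fract ((p : ℝ) * θ) ≤ Int.fract ((n : ℝ) * θ) := by
  induction n using Nat.strong_induction_on with
  | _ n ih =>
    by_contra! hc
    obtain ⟨hp, -, -, hno⟩ := h
    have hpn : p < n := by
      rcases h1.lt_or_eq with h | h
      · exact h
      · subst h; exact absurd hc (lt_irrefl _)
    refine hno n ((mem_S_neg_iff θ n).2 ⟨by omega, fun r hr hrn => ?_⟩) ⟨hpn, h2⟩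
    have hlt : Int.fract ((n : ℝ) * θ) < Int.fract ((r : ℝ) * θ) := by
      rcases lt_or_ge r p with h | h
      · exact hc.trans (fract_lt_of_mem θ p r hp hr h)
      · exact hc.trans_le (ih r hrn h (by omega))
    have hr' : (0 : ℝ) < r := by exact_mod_cast hr
    have hrn' : (r : ℝ) < n := by exact_mod_cast hrn
    nlinarith [Int.fract_nonneg ((n : ℝ) * θ)]

/-- For consecutive elements `p < p'` of `S_{-θ}` and any integer `p ≤ N < p'`,
`⌊Nθ⌋ - ⌊(N - p)θ⌋ = ⌊pθ⌋`. -/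
theorem floor_diff_of_consec_neg (θ : ℝ) (hθ : Irrational θ) (p p' : ℕ)
    (h : SθConsec (-θ) p p') (N : ℤ) (hN1 : (p : ℤ) ≤ N) (hN2 : N < (p' : ℤ)) :
    ⌊(N : ℝ) * θ⌋ - ⌊((N : ℝ) - (p : ℝ)) * θ⌋ = ⌊(p : ℝ) * θ⌋ := by
  lift N to ℕ using by omega
  have hf := fract_le_of_consec θ p p' h N (by omega) (by omega)
  have : ⌊(((N : ℤ) : ℝ) - (p : ℝ)) * θ⌋ = ⌊(N : ℝ) * θ⌋ - ⌊(p : ℝ) * θ⌋ := by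
    rw [Int.floor_eq_iff]
    have h1 := Int.fract_lt_one ((N : ℝ) * θ)
    have h2 := Int.fract_nonneg ((p : ℝ) * θ)
    unfold Int.fract at *
    push_cast
    constructor <;> linarith
  rw [this, Int.cast_natCast]
  ring
end

section
/- For every irrational real number θ and every pair of consecutive elements p < p' of S_{−θ}, one has ⌊p'θ⌋ − ⌊(p' − p)θ⌋ = ⌊pθ⌋ + 1. -/
/-- For consecutive elements `p < p'` of `S_{-θ}`,
`⌊p'θ⌋ - ⌊(p' - p)θ⌋ = ⌊pθ⌋ + 1`. -/
theorem floor_diff_at_succ_of_consec_neg (θ : ℝ) (hθ : Irrational θ) (p p' : ℕ)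
    (h : SθConsec (-θ) p p') :
    ⌊(p' : ℝ) * θ⌋ - ⌊((p' : ℝ) - (p : ℝ)) * θ⌋ = ⌊(p : ℝ) * θ⌋ + 1 := by
  obtain ⟨⟨hp, _⟩, ⟨hp', hS⟩, hlt, _⟩ := h
  obtain ⟨d, rfl⟩ := Nat.exists_eq_add_of_lt hlt
  have h1 := hS p hp hlt
  have h2 := hS (d + 1) (by omega) (by omega)
  have e : ((p + d + 1 : ℕ) : ℝ) - (p : ℝ) = ((d + 1 : ℕ) : ℝ) := by push_cast; ring
  rw [e]
  have e3 : ((p + d + 1 : ℕ) : ℝ) = (p : ℝ) + ((d + 1 : ℕ) : ℝ) := by push_cast; ring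
  have hd : (0 : ℝ) < ((d + 1 : ℕ) : ℝ) := by positivity
  have hpr : (0 : ℝ) < (p : ℝ) := by exact_mod_cast hp
  rw [e3] at h1 h2 ⊢
  generalize ((d + 1 : ℕ) : ℝ) = D at *
  simp only [mul_neg, Int.ceil_neg, Int.cast_neg] at h1 h2
  rw [div_lt_div_iff₀ (by positivity) (by positivity)] at h1 h2
  have l1 := Int.le_floor_add ((p : ℝ) * θ) (D * θ)
  have l2 := Int.le_floor_add_floor ((p : ℝ) * θ) (D * θ)
  rw [← add_mul] at l1 l2
  have hne : ⌊((p : ℝ) + D) * θ⌋ ≠ ⌊(p : ℝ) * θ⌋ + ⌊D * θ⌋ := by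
    intro heq
    rw [heq] at h1 h2
    push_cast at h1 h2
    nlinarith
  omega
end
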